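/- arXiv:2507.04373 — 4 statements merged into one kernel-verified Lean document; each statement's English description precedes it below -/
import Mathlib

section
/- Let n ≥ 1 be a natural number, let P be a nonempty subset of {1,…,n}, let ρ ∈ (0,1/2) be a real number, and let μ be a probability mass function on {0,1}^n with μ(x) > 0 for every x ∈ {0,1}^n. For β = (β₀,β₁,…,β_n) ∈ ℝ^{n+1} define the threshold classifier ĥ_β(x) = 1{β₀ + Σ_{j=1}^n β_j x_j > 0} and, for λ > 0, the loss L_λ(β) = Σ_{x∈{0,1}^n} μ(x)·(ρ + (1−2ρ)·1{ĥ_β(x) ≠ θ(x)}) + λ·|{j ∈ {1,…,n} : β_j ≠ 0}|, where θ(x) = max_{j∈P} x_j is the OR of the coordinates in P. Then there exists λ > 0 such that every global minimizer β* of L_λ satisfies β*_j = 0 for every j ∉ P and β*_j > 0 for every j ∈ P. -/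
open Finset

/-- Threshold classifier `1{β₀ + Σ_j β_j x_j > 0}` as a real value. -/
noncomputable def classifierOut (n : ℕ) (β₀ : ℝ) (β : Fin n → ℝ) (x : Fin n → Bool) : ℝ :=
  if 0 < β₀ + ∑ j, β j * (if x j then 1 else 0) then 1 else 0

/-- OR target: `θ(x) = max_{j ∈ P} x_j`. -/
noncomputable def orTarget (n : ℕ) (P : Finset (Fin n)) (x : Fin n → Bool) : ℝ :=
  if ∃ j ∈ P, x j = true then 1 else 0

/-- The loss `Σ_x μ(x)·(ρ + (1−2ρ)·1{ĥ_β(x) ≠ θ(x)}) + λ·#{j : β_j ≠ 0}`. -/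
noncomputable def lossFn (n : ℕ) (ρ lam : ℝ) (μ : (Fin n → Bool) → ℝ)
    (θ : (Fin n → Bool) → ℝ) (β₀ : ℝ) (β : Fin n → ℝ) : ℝ :=
  (∑ x : Fin n → Bool, μ x *
      (ρ + (1 - 2 * ρ) * (if classifierOut n β₀ β x = θ x then 0 else 1)))
    + lam * ((Finset.univ.filter fun j => β j ≠ 0).card : ℝ)

/-!
Every minimizer must classify without error once `λ` is so small that a single mistake, which costs
at least `(1 - 2ρ) min μ`, outweighs the whole penalty `λ |P|` of the error-free classifier
`1{-1/2 + ∑ j ∈ P, x_j > 0}`. Error-free classification of the zero input gives `β₀ ≤ 0`, and then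
error-free classification of the unit vectors `e_j`, `j ∈ P`, gives `β_j > 0`. So the support of `β`
contains `P`; comparing penalties, it has at most `|P|` elements, hence equals `P`.
-/

section Classifier

variable {n : ℕ} {P : Finset (Fin n)} {β₀ : ℝ} {β : Fin n → ℝ}

lemma classifierOut_const_false (β₀ : ℝ) (β : Fin n → ℝ) :
    classifierOut n β₀ β (fun _ ↦ false) = if 0 < β₀ then 1 else 0 := by
  simp [classifierOut]

lemma classifierOut_decide_eq (β₀ : ℝ) (β : Fin n → ℝ) (j : Fin n) :
    classifierOut n β₀ β (fun i ↦ decide (i = j)) = if 0 < β₀ + β j then 1 else 0 := by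
  simp [classifierOut]

lemma orTarget_const_false (P : Finset (Fin n)) : orTarget n P (fun _ ↦ false) = 0 := by
  simp [orTarget]

lemma orTarget_decide_eq {j : Fin n} (hj : j ∈ P) :
    orTarget n P (fun i ↦ decide (i = j)) = 1 := by
  simp [orTarget, hj]

lemma classifierOut_indicator_eq_orTarget (P : Finset (Fin n)) :
    classifierOut n (-(1 / 2)) (fun j ↦ if j ∈ P then 1 else 0) = orTarget n P := by
  funext x
  have sum_eq_card : ∑ j, (if j ∈ P then (1 : ℝ) else 0) * (if x j then 1 else 0) =
      #{j ∈ P | x j = true} := by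
    simp only [boole_mul, sum_ite_mem, univ_inter, sum_boole]
  have pos_iff (k : ℕ) : 0 < -(1 / 2) + (k : ℝ) ↔ 0 < k := by
    refine ⟨fun h ↦ ?_, fun h ↦ ?_⟩
    · exact_mod_cast (by linarith : (0 : ℝ) < k)
    · have : (1 : ℝ) ≤ k := by exact_mod_cast h
      linarith
  simp only [classifierOut, orTarget, sum_eq_card, pos_iff, card_pos, filter_nonempty_iff]

lemma pos_of_classifierOut_eq_orTarget (h : classifierOut n β₀ β = orTarget n P) {j : Fin n}
    (hj : j ∈ P) : 0 < β j := by
  have intercept_nonpos : β₀ ≤ 0 := by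
    simpa [classifierOut_const_false, orTarget_const_false] using congrFun h fun _ ↦ false
  have unit_vector_accepted : 0 < β₀ + β j := by
    simpa [classifierOut_decide_eq, orTarget_decide_eq hj] using
      congrFun h fun i ↦ decide (i = j)
  linarith

end Classifier

lemma eq_zero_of_card_support_le {ι M : Type*} [Fintype ι] [Zero M] [DecidableEq M]
    {f : ι → M} {s : Finset ι} (hs : ∀ i ∈ s, f i ≠ 0) (hcard : #{i | f i ≠ 0} ≤ #s)
    {i : ι} (hi : i ∉ s) : f i = 0 := by
  have support_eq : s = ({i | f i ≠ 0} : Finset ι) :=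
    eq_of_subset_of_card_le (fun i hi ↦ by simpa using hs i hi) hcard
  simpa [support_eq] using hi

section Loss

variable {n : ℕ} {ρ lam : ℝ} {μ θ : (Fin n → Bool) → ℝ} {β₀ γ₀ : ℝ} {β γ : Fin n → ℝ}

lemma lossFn_eq (ρ lam : ℝ) (μ θ : (Fin n → Bool) → ℝ) (β₀ : ℝ) (β : Fin n → ℝ) :
    lossFn n ρ lam μ θ β₀ β =
      ρ * ∑ x, μ x + (1 - 2 * ρ) * ∑ x with classifierOut n β₀ β x ≠ θ x, μ x
        + lam * #{j | β j ≠ 0} := by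
  simp only [lossFn, sum_filter, mul_sum, ← sum_add_distrib]
  congr 1
  refine sum_congr rfl fun x _ ↦ ?_
  split_ifs <;> first | contradiction | ring

lemma lossFn_of_classifierOut_eq (h : classifierOut n β₀ β = θ) :
    lossFn n ρ lam μ θ β₀ β = ρ * ∑ x, μ x + lam * #{j | β j ≠ 0} := by
  simp [lossFn_eq, h]

lemma le_lossFn_of_classifierOut_ne (hρ : ρ ≤ 1 / 2) (hlam : 0 ≤ lam) (hμ : ∀ x, 0 ≤ μ x)
    {x : Fin n → Bool} (hx : classifierOut n β₀ β x ≠ θ x) :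
    ρ * ∑ y, μ y + (1 - 2 * ρ) * μ x ≤ lossFn n ρ lam μ θ β₀ β := by
  have mass_le : μ x ≤ ∑ y with classifierOut n β₀ β y ≠ θ y, μ y :=
    single_le_sum (fun y _ ↦ hμ y) (by simpa using hx)
  have error_cost_le := mul_le_mul_of_nonneg_left mass_le (by linarith : 0 ≤ 1 - 2 * ρ)
  have penalty_nonneg : 0 ≤ lam * #{j | β j ≠ 0} := by positivity
  rw [lossFn_eq]
  linarith

lemma classifierOut_eq_of_lossFn_le (hρ : ρ ≤ 1 / 2) (hlam : 0 ≤ lam) (hμ : ∀ x, 0 ≤ μ x)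
    (hγ : classifierOut n γ₀ γ = θ)
    (hsmall : ∀ x, lam * #{j | γ j ≠ 0} < (1 - 2 * ρ) * μ x)
    (hle : lossFn n ρ lam μ θ β₀ β ≤ lossFn n ρ lam μ θ γ₀ γ) :
    classifierOut n β₀ β = θ := by
  funext x
  by_contra hx
  have mistake_cost := le_lossFn_of_classifierOut_ne hρ hlam hμ hx
  rw [lossFn_of_classifierOut_eq hγ] at hle
  linarith [hsmall x]

lemma card_support_le_of_lossFn_le (hlam : 0 < lam) (hβ : classifierOut n β₀ β = θ)
    (hγ : classifierOut n γ₀ γ = θ)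
    (hle : lossFn n ρ lam μ θ β₀ β ≤ lossFn n ρ lam μ θ γ₀ γ) :
    #{j | β j ≠ 0} ≤ #{j | γ j ≠ 0} := by
  rw [lossFn_of_classifierOut_eq hβ, lossFn_of_classifierOut_eq hγ] at hle
  exact_mod_cast le_of_mul_le_mul_left (le_of_add_le_add_left hle) hlam

end Loss

/-- Any global minimizer of the ℓ₀-penalized loss for an OR target has zero
coefficients outside `P` and strictly positive coefficients on `P`. -/
theorem or_subgoal_recovery (n : ℕ) (hn : 1 ≤ n) (P : Finset (Fin n)) (hP : P.Nonempty)
    (ρ : ℝ) (hρ0 : 0 < ρ) (hρ : ρ < 1 / 2)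
    (μ : (Fin n → Bool) → ℝ) (hμpos : ∀ x, 0 < μ x) (hμsum : ∑ x, μ x = 1) :
    ∃ lam : ℝ, 0 < lam ∧
      ∀ (β₀ : ℝ) (β : Fin n → ℝ),
        (∀ (γ₀ : ℝ) (γ : Fin n → ℝ),
            lossFn n ρ lam μ (orTarget n P) β₀ β ≤ lossFn n ρ lam μ (orTarget n P) γ₀ γ) →
        (∀ j, j ∉ P → β j = 0) ∧ (∀ j ∈ P, 0 < β j) := by

  obtain ⟨x₀, hx₀⟩ := Finite.exists_min μ
  have hc : 0 < 1 - 2 * ρ := by linarith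
  obtain ⟨lam, hlam, hlt⟩ := exists_pos_mul_lt (mul_pos hc (hμpos x₀)) (#P : ℝ)
  refine ⟨lam, hlam, fun β₀ β hmin ↦ ?_⟩
  have href := classifierOut_indicator_eq_orTarget P
  have hle := hmin (-(1 / 2)) fun j ↦ if j ∈ P then 1 else 0
  have support_ref : #{j | (if j ∈ P then (1 : ℝ) else 0) ≠ 0} = #P := by simp
  have hsmall (x : Fin n → Bool) :
      lam * #{j | (if j ∈ P then (1 : ℝ) else 0) ≠ 0} < (1 - 2 * ρ) * μ x := by
    rw [support_ref, mul_comm]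
    exact hlt.trans_le (mul_le_mul_of_nonneg_left (hx₀ x) hc.le)
  have hβ : classifierOut n β₀ β = orTarget n P :=
    classifierOut_eq_of_lossFn_le hρ.le hlam.le (fun x ↦ (hμpos x).le) href hsmall hle
  have hpos : ∀ j ∈ P, 0 < β j := fun j hj ↦ pos_of_classifierOut_eq_orTarget hβ hj
  have hcard : #{j | β j ≠ 0} ≤ #P :=
    (card_support_le_of_lossFn_le hlam hβ href hle).trans_eq support_ref
  exact ⟨fun j hj ↦ eq_zero_of_card_support_le (fun i hi ↦ (hpos i hi).ne') hcard hj, hpos⟩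
end

section
/- Let n ≥ 1 be a natural number, let P be a nonempty subset of {1,…,n}, let β : P → ℝ, and let β₀ ∈ ℝ. Then the following are equivalent: (i) for every i ∈ P, Σ_{j∈P, j≠i} β_j ≤ −β₀, and Σ_{j∈P} β_j > −β₀; (ii) for every x ∈ {0,1}^n, the indicator 1{β₀ + Σ_{j∈P} β_j x_j > 0} equals min_{j∈P} x_j (the AND of the coordinates of x indexed by P). Moreover, these conditions imply β_j > 0 for every j ∈ P, and hence that Σ_{j∈U} β_j ≤ −β₀ for every proper subset U ⊊ P. -/
open Finset

/-!
Only the set `U ⊆ P` of coordinates where the input is `1` matters, so a threshold classifier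
computes the AND iff `P` is the only subset of `P` whose weight exceeds the threshold. Comparing
the weight of `P` with that of `P.erase i` shows that every weight is positive, so the heaviest
proper subsets are among the sets `P.erase i`, and it is enough to test those.
-/

/-- The subset-sum conditions that make the weights `w` and the threshold `θ` compute the AND of
the coordinates in `P`: the total weight of `P` exceeds `θ`, but no longer does once any single
coordinate is dropped. The bias of a classifier `0 < β₀ + ∑ …` enters as `θ = -β₀`. -/
def IsAndThreshold {ι M : Type*} [DecidableEq ι] [AddCommMonoid M] [Preorder M]
    (P : Finset ι) (w : ι → M) (θ : M) : Prop :=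
  (∀ i ∈ P, ∑ j ∈ P.erase i, w j ≤ θ) ∧ θ < ∑ j ∈ P, w j

namespace IsAndThreshold

variable {ι M : Type*} [DecidableEq ι] [AddCommMonoid M] [PartialOrder M]
  [IsOrderedCancelAddMonoid M] {P U : Finset ι} {w : ι → M} {θ : M}

theorem pos (h : IsAndThreshold P w θ) {i : ι} (hi : i ∈ P) : 0 < w i := by
  have hlt : ∑ j ∈ P.erase i, w j < w i + ∑ j ∈ P.erase i, w j :=
    calc ∑ j ∈ P.erase i, w j ≤ θ := h.1 i hi
      _ < ∑ j ∈ P, w j := h.2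
      _ = w i + ∑ j ∈ P.erase i, w j := (add_sum_erase P w hi).symm
  exact pos_of_lt_add_left hlt

theorem sum_le_of_ssubset (h : IsAndThreshold P w θ) (hU : U ⊂ P) : ∑ j ∈ U, w j ≤ θ := by
  obtain ⟨i, hi, hUi⟩ := ssubset_iff_exists_subset_erase.mp hU
  calc ∑ j ∈ U, w j ≤ ∑ j ∈ P.erase i, w j :=
        sum_le_sum_of_subset_of_nonneg hUi fun j hj _ ↦ (h.pos (mem_of_mem_erase hj)).le
    _ ≤ θ := h.1 i hi

theorem lt_sum_iff (h : IsAndThreshold P w θ) (hU : U ⊆ P) : θ < ∑ j ∈ U, w j ↔ U = P := by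
  refine ⟨fun hlt ↦ ?_, fun hUP ↦ hUP ▸ h.2⟩
  by_contra hne
  exact (h.sum_le_of_ssubset (hU.ssubset_of_ne hne)).not_gt hlt

end IsAndThreshold

section LinearOrder

variable {ι M : Type*} [DecidableEq ι] [AddCommMonoid M] [LinearOrder M]
  [IsOrderedCancelAddMonoid M]

theorem isAndThreshold_iff_forall_subset (P : Finset ι) (w : ι → M) (θ : M) :
    IsAndThreshold P w θ ↔ ∀ U ⊆ P, (θ < ∑ j ∈ U, w j ↔ U = P) := by
  refine ⟨fun h U hU ↦ h.lt_sum_iff hU, fun h ↦ ⟨fun i hi ↦ ?_, (h P Subset.rfl).mpr rfl⟩⟩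
  have herase : P.erase i ≠ P := (erase_ssubset hi).ne
  exact not_lt.mp fun hlt ↦ herase ((h _ (erase_subset i P)).mp hlt)

theorem isAndThreshold_iff_forall_bool (P : Finset ι) (w : ι → M) (θ : M) :
    IsAndThreshold P w θ ↔
      ∀ x : ι → Bool, (θ < ∑ j ∈ P with x j, w j ↔ ∀ j ∈ P, x j = true) := by
  rw [isAndThreshold_iff_forall_subset]
  constructor
  · intro h x
    rw [h _ (filter_subset _ P), filter_eq_self]
  · intro h U hU
    have hfilter : ({j ∈ P | decide (j ∈ U)} : Finset ι) = U := by
      simpa only [decide_eq_true_eq, filter_mem_eq_inter] using inter_eq_right.mpr hU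
    rw [← hfilter, filter_eq_self]
    exact h fun j ↦ decide (j ∈ U)

end LinearOrder

theorem ite_one_zero_eq_ite_one_zero_iff {R : Type*} [Zero R] [One R] [NeZero (1 : R)]
    (p q : Prop) [Decidable p] [Decidable q] :
    (if p then (1 : R) else 0) = (if q then 1 else 0) ↔ (p ↔ q) := by
  by_cases hp : p <;> by_cases hq : q <;> simp [hp, hq]

theorem and_threshold_iff_general {ι R : Type*} [DecidableEq ι] [Ring R] [LinearOrder R]
    [IsStrictOrderedRing R] (P : Finset ι) (β : ι → R) (β₀ : R) :
    (((∀ i ∈ P, ∑ j ∈ P.erase i, β j ≤ -β₀) ∧ -β₀ < ∑ j ∈ P, β j) ↔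
      ∀ x : ι → Bool,
        (if 0 < β₀ + ∑ j ∈ P, β j * (if x j then (1 : R) else 0) then (1 : R) else 0)
          = (if ∀ j ∈ P, x j = true then 1 else 0)) ∧
    (((∀ i ∈ P, ∑ j ∈ P.erase i, β j ≤ -β₀) ∧ -β₀ < ∑ j ∈ P, β j) →
      (∀ j ∈ P, 0 < β j) ∧ ∀ U : Finset ι, U ⊂ P → ∑ j ∈ U, β j ≤ -β₀) := by
  change (IsAndThreshold P β (-β₀) ↔ _) ∧ (IsAndThreshold P β (-β₀) → _)
  constructor
  · simp only [ite_one_zero_eq_ite_one_zero_iff, mul_ite, mul_one, mul_zero, ← sum_filter,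
      ← neg_lt_iff_pos_add']
    exact isAndThreshold_iff_forall_bool P β (-β₀)
  · exact fun h ↦ ⟨fun _ ↦ h.pos, fun _ ↦ h.sum_le_of_ssubset⟩

/-- The threshold classifier `1{β₀ + Σ_{j∈P} β_j x_j > 0}` computes the AND of
the coordinates indexed by `P` on all binary inputs iff
`Σ_{j∈P, j≠i} β_j ≤ −β₀` for every `i ∈ P` and `Σ_{j∈P} β_j > −β₀`; moreover
these conditions imply `β_j > 0` for all `j ∈ P` and `Σ_{j∈U} β_j ≤ −β₀` for
every proper subset `U ⊊ P`. -/
theorem and_threshold_iff (n : ℕ) (hn : 1 ≤ n) (P : Finset (Fin n)) (hP : P.Nonempty)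
    (β : Fin n → ℝ) (β₀ : ℝ) :
    (((∀ i ∈ P, ∑ j ∈ P.erase i, β j ≤ -β₀) ∧ -β₀ < ∑ j ∈ P, β j) ↔
      ∀ x : Fin n → Bool,
        (if 0 < β₀ + ∑ j ∈ P, β j * (if x j then (1 : ℝ) else 0) then (1 : ℝ) else 0)
          = (if ∀ j ∈ P, x j = true then 1 else 0)) ∧
    (((∀ i ∈ P, ∑ j ∈ P.erase i, β j ≤ -β₀) ∧ -β₀ < ∑ j ∈ P, β j) →
      (∀ j ∈ P, 0 < β j) ∧ ∀ U : Finset (Fin n), U ⊂ P → ∑ j ∈ U, β j ≤ -β₀) := by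
  -- The two sides decide `∀ j ∈ P, x j = true` by different instances.
  convert and_threshold_iff_general P β β₀
end

section
/- Let n ≥ 5 be a natural number and let c be a real number with 0 < c < 1. Set p = c·log(n)/(n−1) and a = 1 + p − p². Then p·(a^{n−1} − 1)/(a − 1) ≤ 2·n^c. -/
/-!
The ratio is the geometric sum `∑ a ^ i` over `i < n - 1`. Since `|a| ≤ exp p` and
`p ≤ exp p - 1`, replacing `a` by `exp p` and then the factor `p` by `exp p - 1` makes the sum
telescope to `exp p ^ (n - 1) - 1 = n ^ c - 1`.
-/

open Finset Real

lemma abs_one_add_sub_sq_le_exp {p : ℝ} (hp : 0 ≤ p) : |1 + p - p ^ 2| ≤ exp p := by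
  have taylor : 1 + p + p ^ 2 / 2 + p ^ 3 / 6 ≤ exp p := by
    simpa [sum_range_succ, Nat.factorial] using sum_le_exp_of_nonneg hp 4
  have lower : p ^ 2 - 1 - p ≤ 1 + p + p ^ 2 / 2 + p ^ 3 / 6 := by
    nlinarith [mul_nonneg hp (sq_nonneg (p - 3 / 2))]
  rw [abs_le]
  constructor
  · linarith
  · linarith [add_one_le_exp p, sq_nonneg p]

lemma mul_geom_sum_le_exp_sub_one {p a : ℝ} (hp : 0 ≤ p) (ha : |a| ≤ exp p) (m : ℕ) :
    p * ∑ i ∈ range m, a ^ i ≤ exp (m * p) - 1 := by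
  have pow_le (i : ℕ) : a ^ i ≤ exp p ^ i :=
    calc a ^ i ≤ |a| ^ i := by simpa only [abs_pow] using le_abs_self (a ^ i)
      _ ≤ exp p ^ i := by gcongr
  calc p * ∑ i ∈ range m, a ^ i
      ≤ p * ∑ i ∈ range m, exp p ^ i := by gcongr p * ∑ i ∈ _, ?_ with i; exact pow_le i
    _ ≤ (exp p - 1) * ∑ i ∈ range m, exp p ^ i := by
        gcongr
        exact le_sub_iff_add_le.mpr (add_one_le_exp p)
    _ = exp (m * p) - 1 := by rw [mul_geom_sum, exp_nat_mul]

lemma one_add_sub_sq_ne_one {p : ℝ} (hp0 : p ≠ 0) (hp1 : p ≠ 1) : 1 + p - p ^ 2 ≠ 1 := by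
  have factor : 1 + p - p ^ 2 - 1 = p * (1 - p) := by ring
  rw [← sub_ne_zero, factor]
  exact mul_ne_zero hp0 (sub_ne_zero.mpr hp1.symm)

lemma mul_log_div_sub_one_lt_one {x c : ℝ} (hx : 1 < x) (hc : c ≤ 1) :
    c * log x / (x - 1) < 1 := by
  rw [div_lt_one (sub_pos.mpr hx)]
  calc c * log x ≤ log x := mul_le_of_le_one_left (log_pos hx).le hc
    _ < x - 1 := log_lt_sub_one_of_pos (by linarith) hx.ne'

theorem geometric_ancestor_bound_general (n : ℕ) (hn : 2 ≤ n) (c : ℝ) (hc : 0 < c)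
    (p a : ℝ) (hp : p = c * Real.log n / ((n : ℝ) - 1)) (hp1 : p ≠ 1) (ha : a = 1 + p - p ^ 2) :
    p * ((a ^ (n - 1) - 1) / (a - 1)) ≤ (n : ℝ) ^ c - 1 := by
  have hn1 : (1 : ℝ) < n := by exact_mod_cast hn
  have pred_pos : 0 < (n : ℝ) - 1 := by linarith
  have p_pos : 0 < p := hp ▸ div_pos (mul_pos hc (log_pos hn1)) pred_pos
  have exponent : ((n - 1 : ℕ) : ℝ) * p = log n * c := by
    rw [Nat.cast_pred (by omega), hp, mul_div_cancel₀ _ pred_pos.ne', mul_comm]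
  rw [ha, ← geom_sum_eq (one_add_sub_sq_ne_one p_pos.ne' hp1),
    rpow_def_of_pos (by linarith), ← exponent]
  exact mul_geom_sum_le_exp_sub_one p_pos.le (abs_one_add_sub_sq_le_exp p_pos.le) (n - 1)

/-- For a natural number `n ≥ 5` and `0 < c < 1`, with `p = c·log(n)/(n−1)` and
`a = 1 + p − p²`, one has `p·(a^{n−1} − 1)/(a − 1) ≤ 2·n^c`. -/
theorem geometric_ancestor_bound (n : ℕ) (hn : 5 ≤ n) (c : ℝ) (hc0 : 0 < c) (hc1 : c < 1)
    (p a : ℝ) (hp : p = c * Real.log n / ((n : ℝ) - 1)) (ha : a = 1 + p - p ^ 2) :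
    p * ((a ^ (n - 1) - 1) / (a - 1)) ≤ 2 * (n : ℝ) ^ c := by
  have p_lt_one : p < 1 := hp ▸ mul_log_div_sub_one_lt_one (by norm_cast; omega) hc1.le
  linarith [geometric_ancestor_bound_general n (by omega) c hc0 p a hp p_lt_one.ne ha,
    rpow_nonneg n.cast_nonneg c]
end

section
/- Let n and k be natural numbers with 0 < k < n, fix a distinguished element e of an n-element set V, and let w be a nonnegative real weight function on the k-element subsets of V whose total sum over all k-element subsets equals 1. Assume that for every k-element subset S with e ∉ S and every i ∈ S, the swapped set (S \ {i}) ∪ {e} satisfies w((S \ {i}) ∪ {e}) ≤ w(S). Then Σ_{S : e ∉ S} w(S) ≥ 1 − k/n, where the sum is over all k-element subsets S of V not containing e. -/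
open Finset

/-!
Double counting swaps: a `k`-subset of the ground set `s` that contains `e` arises by a swap from
exactly `#s - k` of the `k`-subsets avoiding `e`, and each of the latter has exactly `k` swaps.
Summing the swap inequalities bounds the weight through `e` by the fraction `k / #s` of the total.
-/

section Swap

variable {V : Type*} [DecidableEq V]

lemma insert_erase_mem_powersetCard {s S : Finset V} {k : ℕ} {a b : V}
    (hS : S ∈ s.powersetCard k) (ha : a ∈ S) (hb : b ∈ s) (hbS : b ∉ S) :
    insert b (S.erase a) ∈ s.powersetCard k := by
  obtain ⟨hSs, hcard⟩ := mem_powersetCard.1 hS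
  refine mem_powersetCard.2 ⟨insert_subset hb ((erase_subset a S).trans hSs), ?_⟩
  rw [card_insert_of_notMem (fun h => hbS (mem_of_mem_erase h)), card_erase_add_one ha, hcard]

lemma insert_erase_insert_erase {S : Finset V} {a b : V} (ha : a ∈ S) (hb : b ∉ S) :
    insert a ((insert b (S.erase a)).erase b) = S := by
  rw [erase_insert (fun h => hb (mem_of_mem_erase h)), insert_erase ha]

lemma notMem_insert_erase_of_ne (S : Finset V) {a b : V} (hab : a ≠ b) :
    a ∉ insert b (S.erase a) := by
  simp [hab]

lemma sum_powersetCard_mem_sum_sdiff {M : Type*} [AddCommMonoid M] {s : Finset V} {e : V}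
    (he : e ∈ s) (k : ℕ) (f : Finset V → V → M) :
    ∑ S ∈ s.powersetCard k with e ∈ S, ∑ j ∈ s \ S, f S j =
      ∑ S ∈ s.powersetCard k with e ∉ S, ∑ i ∈ S, f (insert e (S.erase i)) i := by
  -- A swap is invertible once the exchanged element is remembered, so biject pairs `(S, j)`.
  rw [sum_sigma', sum_sigma']
  refine sum_bij' (fun p _ => ⟨insert p.2 (p.1.erase e), p.2⟩)
    (fun p _ => ⟨insert e (p.1.erase p.2), p.2⟩) ?_ ?_ ?_ ?_ ?_ <;>
    rintro ⟨S, j⟩ hp <;>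
    simp only [mem_sigma, mem_filter, mem_sdiff] at hp ⊢ <;>
    obtain ⟨⟨hS, heS⟩, hj⟩ := hp
  · exact ⟨⟨insert_erase_mem_powersetCard hS heS hj.1 hj.2,
      notMem_insert_erase_of_ne S (ne_of_mem_of_not_mem heS hj.2)⟩, mem_insert_self _ _⟩
  · exact ⟨⟨insert_erase_mem_powersetCard hS hj he heS, mem_insert_self _ _⟩,
      (mem_powersetCard.1 hS).1 hj, notMem_insert_erase_of_ne S (ne_of_mem_of_not_mem hj heS)⟩
  · rw [insert_erase_insert_erase heS hj.2]
  · rw [insert_erase_insert_erase hj heS]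
  · rw [insert_erase_insert_erase heS hj.2]

variable {M : Type*} [AddCommMonoid M] [PartialOrder M] [IsOrderedAddMonoid M]

lemma sum_sum_sdiff_le_nsmul_sum_notMem {s : Finset V} {e : V} (he : e ∈ s) {k : ℕ}
    {w : Finset V → M}
    (hswap : ∀ S ∈ s.powersetCard k, e ∉ S → ∀ i ∈ S, w (insert e (S.erase i)) ≤ w S) :
    ∑ S ∈ s.powersetCard k with e ∈ S, ∑ _j ∈ s \ S, w S ≤
      k • ∑ S ∈ s.powersetCard k with e ∉ S, w S := by
  rw [sum_powersetCard_mem_sum_sdiff he k fun S _ => w S, ← sum_nsmul]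
  refine sum_le_sum fun S hS => ?_
  obtain ⟨hSk, heS⟩ := mem_filter.1 hS
  calc ∑ i ∈ S, w (insert e (S.erase i))
      ≤ #S • w S := sum_le_card_nsmul S _ _ (hswap S hSk heS)
    _ = k • w S := by rw [(mem_powersetCard.1 hSk).2]

lemma card_nsmul_sum_mem_le_nsmul_sum {s : Finset V} {e : V} (he : e ∈ s) {k : ℕ}
    {w : Finset V → M}
    (hswap : ∀ S ∈ s.powersetCard k, e ∉ S → ∀ i ∈ S, w (insert e (S.erase i)) ≤ w S) :
    #s • ∑ S ∈ s.powersetCard k with e ∈ S, w S ≤ k • ∑ S ∈ s.powersetCard k, w S := by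
  have card_split : ∀ S ∈ (s.powersetCard k).filter (e ∈ ·),
      #s • w S = k • w S + ∑ _j ∈ s \ S, w S := by
    intro S hS
    obtain ⟨hSs, hcard⟩ := mem_powersetCard.1 (mem_filter.1 hS).1
    rw [sum_const, ← add_nsmul, ← hcard, add_comm, card_sdiff_add_card_eq_card hSs]
  calc #s • ∑ S ∈ s.powersetCard k with e ∈ S, w S
      = k • (∑ S ∈ s.powersetCard k with e ∈ S, w S) +
          ∑ S ∈ s.powersetCard k with e ∈ S, ∑ _j ∈ s \ S, w S := by
        rw [← sum_nsmul, ← sum_nsmul, ← sum_add_distrib, sum_congr rfl card_split]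
    _ ≤ k • (∑ S ∈ s.powersetCard k with e ∈ S, w S) +
          k • ∑ S ∈ s.powersetCard k with e ∉ S, w S := by
        gcongr
        exact sum_sum_sdiff_le_nsmul_sum_notMem he hswap
    _ = k • ∑ S ∈ s.powersetCard k, w S := by
        rw [← nsmul_add, sum_filter_add_sum_filter_not]

end Swap

theorem avoid_weight_lower_bound_general {V K : Type*} [DecidableEq V]
    [Field K] [LinearOrder K] [IsStrictOrderedRing K] {s : Finset V} {e : V} (he : e ∈ s)
    {k : ℕ} {w : Finset V → K}
    (hswap : ∀ S ∈ s.powersetCard k, e ∉ S → ∀ i ∈ S, w (insert e (S.erase i)) ≤ w S) :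
    (1 - (k : K) / #s) * ∑ S ∈ s.powersetCard k, w S ≤
      ∑ S ∈ s.powersetCard k with e ∉ S, w S := by
  have hs : (0 : K) < #s := Nat.cast_pos.2 (card_pos.2 ⟨e, he⟩)
  have hmem : ∑ S ∈ s.powersetCard k with e ∈ S, w S ≤
      (k : K) / #s * ∑ S ∈ s.powersetCard k, w S := by
    rw [div_mul_eq_mul_div, le_div_iff₀' hs]
    simpa only [nsmul_eq_mul] using card_nsmul_sum_mem_le_nsmul_sum he hswap
  have hsplit := sum_filter_add_sum_filter_not (s.powersetCard k) (e ∈ ·) w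
  linarith

/-- Swap inequality for weights on `k`-element subsets: if replacing any element
of a `k`-set avoiding `e` by `e` never increases the weight, then the total
weight of `k`-sets avoiding `e` is at least `1 − k/n`. -/
theorem avoid_weight_lower_bound {V : Type*} [Fintype V] [DecidableEq V]
    (n k : ℕ) (hk : 0 < k) (hkn : k < n) (hcard : Fintype.card V = n) (e : V)
    (w : Finset V → ℝ)
    (hw0 : ∀ S : Finset V, S.card = k → 0 ≤ w S)
    (hwsum : ∑ S ∈ (Finset.univ : Finset V).powersetCard k, w S = 1)
    (hswap : ∀ S : Finset V, S.card = k → e ∉ S →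
      ∀ i ∈ S, w (insert e (S.erase i)) ≤ w S) :
    1 - (k : ℝ) / n ≤
      ∑ S ∈ ((Finset.univ : Finset V).powersetCard k).filter (fun S => e ∉ S), w S := by
  simpa only [hwsum, mul_one, card_univ, hcard] using
    avoid_weight_lower_bound_general (mem_univ e) fun S hS => hswap S (mem_powersetCard.1 hS).2
end
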